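/- arXiv:math/0406504 — 2 statements merged into one kernel-verified Lean document; each statement's English description precedes it below -/
import Mathlib

section
/- For k = 2 and k = 3, for all n ≥ 1 and all ε ∈ (0,1/2), the unique best protocol up to π_S for maximizing 𝒫(f_1,…,f_k;ε) over protocols of balanced functions is f_1 = ⋯ = f_k = f, where f(x) = x_1. -/
open Finset

/-- Probability weight of receiving `y` when the source string is `x`: each bit of `x`
is flipped independently with probability `ε`. -/
noncomputable def noiseWt (ε : ℝ) {n : ℕ} (x y : Fin n → Bool) : ℝ :=
  ∏ j : Fin n, if y j = x j then 1 - ε else ε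

/-- A function is balanced if it takes the values `false` and `true` equally often. -/
def BalancedFn {n : ℕ} (f : (Fin n → Bool) → Bool) : Prop :=
  (Finset.univ.filter fun x : Fin n → Bool => f x = false).card =
    (Finset.univ.filter fun x : Fin n → Bool => f x = true).card

/-- The transformation `π_S` : permute coordinates by `π` and flip the bits outside `S`. -/
def piS {n : ℕ} (π : Equiv.Perm (Fin n)) (S : Finset (Fin n)) (x : Fin n → Bool) :
    Fin n → Bool :=
  fun i => if i ∈ S then x (π i) else !(x (π i))

/-- `𝒫(f₁,…,f_k; ε)`: the probability that all `k` parties agree, where the source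
`x` is uniform on `{0,1}^n` and party `i` receives an independent `ε`-corruption `yᵢ` of `x`. -/
noncomputable def agreeProb (ε : ℝ) (n k : ℕ) (fs : Fin k → (Fin n → Bool) → Bool) : ℝ :=
  ((2 : ℝ) ^ n)⁻¹ * ∑ x : Fin n → Bool, ∑ ys : Fin k → Fin n → Bool,
    (∏ i : Fin k, noiseWt ε x (ys i)) *
      (if ∀ i j : Fin k, fs i (ys i) = fs j (ys j) then 1 else 0)

/-!
Encode the function of each party as a `±1`-valued function `F`, and let `T` be the operator
averaging over the noise, which scales the Walsh coefficient at `S` by `ρ ^ #S` for `ρ = 1 - 2ε`.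
For two or three parties the agreement probability is an increasing affine function of the sum of
the correlations `𝔼 (T F) (T G)` over pairs of parties: the cubic terms for three parties cancel
between the events that all output `0` and that all output `1`. A balanced `F` has no Walsh
coefficient at `∅`, so by Parseval `𝔼 (T F)² ≤ ρ²`, with equality only if `F` is concentrated on
level one, which for a Boolean function means that it depends on a single coordinate. Polarization
transfers the bound to pairs, with equality only if `T F = T G`, that is, `F = G`.
-/

open scoped BigOperators

section Walsh

variable {ι : Type*}

/-- The `±1` encoding `b ↦ (-1) ^ b` of a bit, with `false ↦ 1` and `true ↦ -1`. -/
def boolSign (b : Bool) : ℝ := if b then -1 else 1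

lemma boolSign_sq (b : Bool) : boolSign b ^ 2 = 1 := by cases b <;> simp [boolSign]

lemma boolSign_not (b : Bool) : boolSign (!b) = -boolSign b := by cases b <;> simp [boolSign]

lemma boolSign_xor (a b : Bool) : boolSign (a ^^ b) = boolSign a * boolSign b := by
  cases a <;> cases b <;> simp [boolSign]

lemma boolSign_injective : Function.Injective boolSign := by
  intro a b h
  cases a <;> cases b <;> first | rfl | norm_num [boolSign] at h

/-- The Walsh character `χ_S` on the cube `{0,1}^ι`, in its `±1`-valued form. -/
def walsh (S : Finset ι) (x : ι → Bool) : ℝ := ∏ i ∈ S, boolSign (x i)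

lemma walsh_singleton (i : ι) (x : ι → Bool) : walsh {i} x = boolSign (x i) :=
  Finset.prod_singleton _ _

/-- A Boolean function is a dictator if it is a coordinate or the negation of a coordinate. -/
def IsDictator (f : (ι → Bool) → Bool) : Prop :=
  ∃ (i : ι) (b : Bool), ∀ x, f x = (b ^^ x i)

lemma isDictator_eval (i : ι) : IsDictator fun x : ι → Bool => x i :=
  ⟨i, false, fun x => (Bool.false_xor (x i)).symm⟩

variable [Fintype ι]

lemma sum_walsh_mul_walsh (x y : ι → Bool) :
    ∑ S, walsh S x * walsh S y = if x = y then (2 : ℝ) ^ Fintype.card ι else 0 := by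
  have factor : ∑ S, walsh S x * walsh S y = ∏ i, (1 + boolSign (x i) * boolSign (y i)) := by
    simp only [walsh, ← Finset.prod_mul_distrib, Finset.prod_one_add, Finset.powerset_univ]
  rw [factor]
  split_ifs with hxy
  · simp only [hxy, ← sq, boolSign_sq, one_add_one_eq_two, Finset.prod_const, Finset.card_univ]
  · obtain ⟨i, hi⟩ := Function.ne_iff.mp hxy
    refine Finset.prod_eq_zero (Finset.mem_univ i) ?_
    rw [Bool.eq_not.mpr hi, boolSign_not, neg_mul, ← sq, boolSign_sq, add_neg_cancel]

variable [DecidableEq ι]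

/-- The Walsh (Fourier) coefficient of `F` at `S`, for the uniform distribution on the cube. -/
noncomputable def walshCoeff (F : (ι → Bool) → ℝ) (S : Finset ι) : ℝ :=
  𝔼 x, F x * walsh S x

lemma walshCoeff_empty (F : (ι → Bool) → ℝ) : walshCoeff F ∅ = 𝔼 x, F x := by
  simp [walshCoeff, walsh]

lemma sum_walshCoeff_mul_walsh (F : (ι → Bool) → ℝ) (x : ι → Bool) :
    ∑ S, walshCoeff F S * walsh S x = F x := by
  calc ∑ S, walshCoeff F S * walsh S x
      = 𝔼 y, F y * ∑ S, walsh S y * walsh S x := by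
        simp only [walshCoeff, Finset.expect_mul, Finset.mul_sum, Finset.expect_sum_comm, mul_assoc]
    _ = F x := by
        simp only [sum_walsh_mul_walsh, Fintype.expect_eq_sum_div_card, mul_ite, mul_zero,
          Finset.sum_ite_eq', Finset.mem_univ, if_true, Fintype.card_pi, Fintype.card_bool,
          Finset.prod_const, Finset.card_univ, Nat.cast_pow, Nat.cast_ofNat]
        exact mul_div_cancel_right₀ _ (by positivity)

lemma walshCoeff_injective :
    Function.Injective (walshCoeff : ((ι → Bool) → ℝ) → Finset ι → ℝ) := by
  intro F G h
  funext x
  rw [← sum_walshCoeff_mul_walsh F, h, sum_walshCoeff_mul_walsh]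

lemma sum_walshCoeff_sq (F : (ι → Bool) → ℝ) : ∑ S, walshCoeff F S ^ 2 = 𝔼 x, F x ^ 2 := by
  calc ∑ S, walshCoeff F S ^ 2
      = ∑ S, 𝔼 x, F x * (walshCoeff F S * walsh S x) := by
        refine Finset.sum_congr rfl fun S _ => ?_
        rw [sq]
        nth_rw 2 [walshCoeff]
        rw [Finset.mul_expect]
        exact Finset.expect_congr rfl fun x _ => by ring
    _ = 𝔼 x, F x ^ 2 := by
        simp only [← Finset.expect_sum_comm, ← Finset.mul_sum, sum_walshCoeff_mul_walsh, sq]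

lemma expect_boolSign_comp_sq (f : (ι → Bool) → Bool) : 𝔼 x, (boolSign ∘ f) x ^ 2 = 1 := by
  simp only [Function.comp_apply, boolSign_sq, Fintype.expect_one]

lemma sub_apply_update_not_of_level_one {F : (ι → Bool) → ℝ}
    (hF : ∀ S, walshCoeff F S ≠ 0 → #S = 1) (i : ι) (x : ι → Bool) :
    F x - F (Function.update x i (!x i)) = 2 * walshCoeff F {i} * boolSign (x i) := by
  rw [← sum_walshCoeff_mul_walsh F x, ← sum_walshCoeff_mul_walsh F (Function.update x i _),
    ← Finset.sum_sub_distrib, Finset.sum_eq_single {i}]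
  · rw [walsh_singleton, walsh_singleton, Function.update_self, boolSign_not]
    ring
  · intro S _ hS
    by_cases hcoeff : walshCoeff F S = 0
    · simp only [hcoeff, zero_mul, sub_zero]
    · obtain ⟨j, rfl⟩ := Finset.card_eq_one.mp (hF S hcoeff)
      have hji : j ≠ i := fun h => hS (h ▸ rfl)
      rw [walsh_singleton, walsh_singleton, Function.update_of_ne hji, sub_self]
  · exact fun h => absurd (Finset.mem_univ _) h

lemma exists_walshCoeff_ne_zero (f : (ι → Bool) → Bool) :
    ∃ S, walshCoeff (boolSign ∘ f) S ≠ 0 := by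
  by_contra! hzero
  have parseval := sum_walshCoeff_sq (boolSign ∘ f)
  rw [expect_boolSign_comp_sq] at parseval
  simp [hzero] at parseval

lemma isDictator_of_level_one {f : (ι → Bool) → Bool}
    (hf : ∀ S, walshCoeff (boolSign ∘ f) S ≠ 0 → #S = 1) : IsDictator f := by
  obtain ⟨S, hS⟩ := exists_walshCoeff_ne_zero f
  obtain ⟨i, rfl⟩ := Finset.card_eq_one.mp (hf S hS)
  set c := walshCoeff (boolSign ∘ f) {i}
  -- Flipping a coordinate with nonzero coefficient changes the value of `f`, negating its sign.
  have sign_eq (x : ι → Bool) : boolSign (f x) = c * boolSign (x i) := by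
    have hflip := sub_apply_update_not_of_level_one hf i x
    simp only [Function.comp_apply] at hflip
    have hne : f (Function.update x i (!x i)) ≠ f x := by
      intro heq
      have hx : boolSign (x i) ≠ 0 := fun h => by simpa [h] using boolSign_sq (x i)
      rw [heq, sub_self] at hflip
      exact mul_ne_zero (mul_ne_zero two_ne_zero hS) hx hflip.symm
    rw [Bool.eq_not.mpr hne, boolSign_not] at hflip
    linarith
  have sign_zero : boolSign (f fun _ => false) = c := by
    rw [sign_eq]
    exact mul_one c
  refine ⟨i, f fun _ => false, fun x => boolSign_injective ?_⟩
  rw [boolSign_xor, sign_zero, sign_eq]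

end Walsh

section Noise

variable {n : ℕ} {ε : ℝ}

lemma noiseWt_comm (ε : ℝ) (x y : Fin n → Bool) : noiseWt ε x y = noiseWt ε y x := by
  simp only [noiseWt, eq_comm]

/-- The noise operator: `noiseOp ε F x` is the expectation of `F` at an `ε`-corruption of `x`. -/
noncomputable def noiseOp (ε : ℝ) : ((Fin n → Bool) → ℝ) →ₗ[ℝ] (Fin n → Bool) → ℝ :=
  (Matrix.of (noiseWt ε)).mulVecLin

lemma noiseOp_apply (ε : ℝ) (F : (Fin n → Bool) → ℝ) (x : Fin n → Bool) :
    noiseOp ε F x = ∑ y, noiseWt ε x y * F y := rfl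

lemma noiseOp_walsh (ε : ℝ) (S : Finset (Fin n)) :
    noiseOp ε (walsh S) = (1 - 2 * ε) ^ #S • walsh S := by
  funext x
  have one_bit (j : Fin n) :
      ∑ b, (if b = x j then 1 - ε else ε) * (if j ∈ S then boolSign b else 1) =
        if j ∈ S then (1 - 2 * ε) * boolSign (x j) else 1 := by
    rw [Fintype.sum_bool]
    cases x j <;> by_cases hj : j ∈ S <;>
      simp only [hj, boolSign, if_true, if_false, Bool.false_eq_true, Bool.true_eq_false] <;>
      ring
  calc noiseOp ε (walsh S) x
      = ∑ y : Fin n → Bool,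
          ∏ j, (if y j = x j then 1 - ε else ε) * (if j ∈ S then boolSign (y j) else 1) := by
        simp only [noiseOp_apply, noiseWt, walsh, Finset.prod_mul_distrib, Finset.prod_ite_mem,
          Finset.univ_inter]
    _ = ∏ j, if j ∈ S then (1 - 2 * ε) * boolSign (x j) else 1 := by
        simp only [← one_bit, Fintype.prod_sum]
    _ = (1 - 2 * ε) ^ #S * walsh S x := by
        rw [Finset.prod_ite_mem, Finset.univ_inter, Finset.prod_mul_distrib, Finset.prod_const,
          walsh]

lemma sum_noiseWt (ε : ℝ) (x : Fin n → Bool) : ∑ y, noiseWt ε x y = 1 := by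
  simpa [noiseOp_apply, walsh] using congrFun (noiseOp_walsh ε ∅) x

lemma expect_noiseOp_mul (ε : ℝ) (F G : (Fin n → Bool) → ℝ) :
    𝔼 x, noiseOp ε F x * G x = 𝔼 x, F x * noiseOp ε G x := by
  simp only [Fintype.expect_eq_sum_div_card, noiseOp_apply, Finset.sum_mul, Finset.mul_sum]
  rw [Finset.sum_comm]
  congr! 3 with y _ x
  rw [noiseWt_comm]
  ring

lemma walshCoeff_noiseOp (ε : ℝ) (F : (Fin n → Bool) → ℝ) (S : Finset (Fin n)) :
    walshCoeff (noiseOp ε F) S = (1 - 2 * ε) ^ #S * walshCoeff F S := by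
  simp only [walshCoeff, expect_noiseOp_mul, noiseOp_walsh, Pi.smul_apply, smul_eq_mul,
    Finset.mul_expect, mul_left_comm]

lemma noiseOp_injective (hε : ε ≠ 1 / 2) :
    Function.Injective (noiseOp ε : ((Fin n → Bool) → ℝ) →ₗ[ℝ] (Fin n → Bool) → ℝ) := by
  intro F G h
  refine walshCoeff_injective (funext fun S => ?_)
  have hρ : (1 - 2 * ε) ^ #S ≠ 0 := pow_ne_zero _ fun h0 => hε (by linarith)
  refine mul_left_cancel₀ hρ ?_
  rw [← walshCoeff_noiseOp, h, walshCoeff_noiseOp]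

lemma walshCoeff_noiseOp_sq_le (hε₀ : 0 ≤ ε) (hε₁ : ε ≤ 1) {F : (Fin n → Bool) → ℝ}
    (hF : 𝔼 x, F x = 0) (S : Finset (Fin n)) :
    walshCoeff (noiseOp ε F) S ^ 2 ≤ (1 - 2 * ε) ^ 2 * walshCoeff F S ^ 2 := by
  rw [walshCoeff_noiseOp, mul_pow, pow_right_comm]
  rcases S.eq_empty_or_nonempty with rfl | hS
  · simp [walshCoeff_empty, hF]
  · gcongr
    exact pow_le_of_le_one (sq_nonneg _) (by nlinarith) (Finset.card_ne_zero.mpr hS)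

lemma expect_noiseOp_sq_le (hε₀ : 0 ≤ ε) (hε₁ : ε ≤ 1) {F : (Fin n → Bool) → ℝ}
    (hF : 𝔼 x, F x = 0) :
    𝔼 x, noiseOp ε F x ^ 2 ≤ (1 - 2 * ε) ^ 2 * 𝔼 x, F x ^ 2 := by
  rw [← sum_walshCoeff_sq, ← sum_walshCoeff_sq, Finset.mul_sum]
  exact Finset.sum_le_sum fun S _ => walshCoeff_noiseOp_sq_le hε₀ hε₁ hF S

lemma card_eq_one_of_expect_noiseOp_sq_eq (hε₀ : 0 < ε) (hε₁ : ε < 1) (hε : ε ≠ 1 / 2)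
    {F : (Fin n → Bool) → ℝ} (hF : 𝔼 x, F x = 0)
    (heq : 𝔼 x, noiseOp ε F x ^ 2 = (1 - 2 * ε) ^ 2 * 𝔼 x, F x ^ 2)
    (S : Finset (Fin n)) (hS : walshCoeff F S ≠ 0) : #S = 1 := by
  rw [← sum_walshCoeff_sq, ← sum_walshCoeff_sq, Finset.mul_sum,
    Finset.sum_eq_sum_iff_of_le fun S _ => walshCoeff_noiseOp_sq_le hε₀.le hε₁.le hF S] at heq
  have hterm := heq S (Finset.mem_univ S)
  rw [walshCoeff_noiseOp, mul_pow, pow_right_comm] at hterm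
  have hpow := mul_right_cancel₀ (pow_ne_zero 2 hS) hterm
  have hρ_pos : 0 < (1 - 2 * ε) ^ 2 := sq_pos_of_ne_zero fun h => hε (by linarith)
  have hρ_lt : (1 - 2 * ε) ^ 2 < 1 := by nlinarith
  exact pow_right_injective₀ hρ_pos hρ_lt.ne (hpow.trans (pow_one _).symm)

end Noise

section Correlation

variable {n : ℕ} {ε : ℝ} {f g : (Fin n → Bool) → Bool}

lemma balancedFn_iff_expect_boolSign : BalancedFn f ↔ 𝔼 x, (boolSign ∘ f) x = 0 := by
  have sum_eq : ∑ x, (boolSign ∘ f) x = (#{x | f x = false} : ℝ) - #{x | f x = true} := by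
    simp only [Finset.natCast_card_filter, ← Finset.sum_sub_distrib]
    exact Finset.sum_congr rfl fun x _ => by cases hx : f x <;> simp [boolSign, hx]
  rw [Fintype.expect_eq_sum_div_card, div_eq_zero_iff, or_iff_left (by simp), sum_eq, sub_eq_zero,
    Nat.cast_inj, BalancedFn]

lemma balancedFn_of_apply_not (hf : ∀ x, f (fun i => !x i) = !f x) : BalancedFn f := by
  refine Finset.card_nbij' (fun x i => !x i) (fun x i => !x i) ?_ ?_ ?_ ?_ <;>
    simp [Set.MapsTo, Set.LeftInvOn, hf]

lemma IsDictator.balancedFn (hf : IsDictator f) : BalancedFn f := by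
  obtain ⟨i, b, hf⟩ := hf
  exact balancedFn_of_apply_not fun x => by simp only [hf, Bool.xor_not]

lemma IsDictator.noiseOp_boolSign_comp (hf : IsDictator f) (ε : ℝ) :
    noiseOp ε (boolSign ∘ f) = (1 - 2 * ε) • (boolSign ∘ f) := by
  obtain ⟨i, b, hf⟩ := hf
  have sign_eq : boolSign ∘ f = boolSign b • walsh {i} := by
    funext x
    simp only [Function.comp_apply, hf, boolSign_xor, Pi.smul_apply, walsh_singleton, smul_eq_mul]
  rw [sign_eq, map_smul, noiseOp_walsh, Finset.card_singleton, pow_one, smul_comm]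

/-- The correlation of the `±1` values of `f` and `g` at two independent `ε`-corruptions of a common
uniform source. -/
noncomputable def noisyCorrelation (ε : ℝ) (f g : (Fin n → Bool) → Bool) : ℝ :=
  𝔼 x, noiseOp ε (boolSign ∘ f) x * noiseOp ε (boolSign ∘ g) x

lemma two_mul_noisyCorrelation (ε : ℝ) (f g : (Fin n → Bool) → Bool) :
    2 * noisyCorrelation ε f g = noisyCorrelation ε f f + noisyCorrelation ε g g -
      𝔼 x, (noiseOp ε (boolSign ∘ f) x - noiseOp ε (boolSign ∘ g) x) ^ 2 := by
  simp only [noisyCorrelation, Finset.mul_expect, ← Finset.expect_add_distrib,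
    ← Finset.expect_sub_distrib]
  exact Finset.expect_congr rfl fun x _ => by ring

lemma noisyCorrelation_self_le (hε₀ : 0 ≤ ε) (hε₁ : ε ≤ 1) (hf : BalancedFn f) :
    noisyCorrelation ε f f ≤ (1 - 2 * ε) ^ 2 := by
  simpa only [noisyCorrelation, ← sq, expect_boolSign_comp_sq, mul_one] using
    expect_noiseOp_sq_le hε₀ hε₁ (balancedFn_iff_expect_boolSign.mp hf)

lemma isDictator_of_noisyCorrelation_self_eq (hε₀ : 0 < ε) (hε₁ : ε < 1) (hε : ε ≠ 1 / 2)
    (hf : BalancedFn f) (heq : noisyCorrelation ε f f = (1 - 2 * ε) ^ 2) : IsDictator f := by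
  refine isDictator_of_level_one <| card_eq_one_of_expect_noiseOp_sq_eq hε₀ hε₁ hε
    (balancedFn_iff_expect_boolSign.mp hf) ?_
  simpa only [noisyCorrelation, ← sq, expect_boolSign_comp_sq, mul_one] using heq

lemma IsDictator.noisyCorrelation_self (hf : IsDictator f) (ε : ℝ) :
    noisyCorrelation ε f f = (1 - 2 * ε) ^ 2 := by
  simp only [noisyCorrelation, hf.noiseOp_boolSign_comp, Pi.smul_apply, smul_eq_mul, ← sq, mul_pow,
    ← Finset.mul_expect, expect_boolSign_comp_sq, mul_one]

lemma noisyCorrelation_le (hε₀ : 0 ≤ ε) (hε₁ : ε ≤ 1) (hf : BalancedFn f) (hg : BalancedFn g) :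
    noisyCorrelation ε f g ≤ (1 - 2 * ε) ^ 2 := by
  have hdist : 0 ≤ 𝔼 x, (noiseOp ε (boolSign ∘ f) x - noiseOp ε (boolSign ∘ g) x) ^ 2 :=
    Finset.expect_nonneg fun x _ => sq_nonneg _
  linarith [two_mul_noisyCorrelation ε f g, noisyCorrelation_self_le hε₀ hε₁ hf,
    noisyCorrelation_self_le hε₀ hε₁ hg]

lemma noisyCorrelation_eq_iff (hε₀ : 0 < ε) (hε₁ : ε < 1) (hε : ε ≠ 1 / 2)
    (hf : BalancedFn f) (hg : BalancedFn g) :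
    noisyCorrelation ε f g = (1 - 2 * ε) ^ 2 ↔ f = g ∧ IsDictator f := by
  constructor
  · intro heq
    have polarization := two_mul_noisyCorrelation ε f g
    have hf_le := noisyCorrelation_self_le hε₀.le hε₁.le hf
    have hg_le := noisyCorrelation_self_le hε₀.le hε₁.le hg
    have hdist : 0 ≤ 𝔼 x, (noiseOp ε (boolSign ∘ f) x - noiseOp ε (boolSign ∘ g) x) ^ 2 :=
      Finset.expect_nonneg fun x _ => sq_nonneg _
    have noise_eq : noiseOp ε (boolSign ∘ f) = noiseOp ε (boolSign ∘ g) := by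
      have hdist_zero := (Finset.expect_eq_zero_iff_of_nonneg
        fun x _ => sq_nonneg _).mp (hdist.antisymm' (by linarith))
      exact funext fun x => sub_eq_zero.mp (sq_eq_zero_iff.mp (hdist_zero x (Finset.mem_univ x)))
    exact ⟨boolSign_injective.comp_left (noiseOp_injective hε noise_eq),
      isDictator_of_noisyCorrelation_self_eq hε₀ hε₁ hε hf (by linarith)⟩
  · rintro ⟨rfl, hdict⟩
    exact hdict.noisyCorrelation_self ε

end Correlation

section Agreement

variable {n k : ℕ} {ε : ℝ} {fs : Fin k → (Fin n → Bool) → Bool}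

lemma sum_noiseWt_mul_ite_eq (ε : ℝ) (f : (Fin n → Bool) → Bool) (b : Bool) (x : Fin n → Bool) :
    ∑ y, noiseWt ε x y * (if f y = b then 1 else 0) =
      (1 + boolSign b * noiseOp ε (boolSign ∘ f) x) / 2 := by
  have indicator (c : Bool) :
      (if c = b then (1 : ℝ) else 0) = (1 + boolSign b * boolSign c) / 2 := by
    cases b <;> cases c <;> norm_num [boolSign]
  simp only [indicator]
  conv_rhs => rw [← sum_noiseWt ε x]
  rw [noiseOp_apply, Finset.mul_sum, ← Finset.sum_add_distrib, Finset.sum_div]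
  exact Finset.sum_congr rfl fun y _ => by rw [Function.comp_apply]; ring

lemma ite_forall_eq_eq_sum_prod {ι β : Type*} [Fintype ι] [Nonempty ι] [Fintype β] [DecidableEq β]
    (a : ι → β) [Decidable (∀ i j, a i = a j)] :
    (if ∀ i j, a i = a j then (1 : ℝ) else 0) = ∑ b, ∏ i, if a i = b then 1 else 0 := by
  simp only [Fintype.prod_boole]
  obtain ⟨i₀⟩ := ‹Nonempty ι›
  split_ifs with h
  · rw [Finset.sum_eq_single (a i₀), if_pos fun i => h i i₀]
    · exact fun b _ hb => if_neg fun hall => hb (hall i₀).symm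
    · exact fun hmem => absurd (Finset.mem_univ _) hmem
  · exact (Finset.sum_eq_zero fun b _ =>
      if_neg fun hall => h fun i j => (hall i).trans (hall j).symm).symm

lemma agreeProb_eq_expect [NeZero k] (ε : ℝ) (fs : Fin k → (Fin n → Bool) → Bool) :
    agreeProb ε n k fs =
      𝔼 x, ∑ b, ∏ i, (1 + boolSign b * noiseOp ε (boolSign ∘ fs i) x) / 2 := by
  rw [agreeProb, Fintype.expect_eq_sum_div_card, div_eq_inv_mul]
  congr 1
  · simp
  refine Finset.sum_congr rfl fun x _ => ?_
  simp only [← sum_noiseWt_mul_ite_eq, Fintype.prod_sum, Finset.prod_mul_distrib,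
    ite_forall_eq_eq_sum_prod, Finset.mul_sum]
  exact Finset.sum_comm

lemma sum_prod_one_add_boolSign_mul (hk : k = 2 ∨ k = 3) (a : Fin k → ℝ) :
    ∑ b, ∏ i, (1 + boolSign b * a i) / 2 =
      (1 + ∑ p : Fin k × Fin k with p.1 < p.2, a p.1 * a p.2) / 2 ^ (k - 1) := by
  rcases hk with rfl | rfl
  · have pairs : ({p | p.1 < p.2} : Finset (Fin 2 × Fin 2)) = {(0, 1)} := by decide
    rw [pairs, Finset.sum_singleton, Fintype.sum_bool, Fin.prod_univ_two, Fin.prod_univ_two]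
    simp only [boolSign, if_true, Bool.false_eq_true, if_false]
    ring
  · have pairs : ({p | p.1 < p.2} : Finset (Fin 3 × Fin 3)) = {(0, 1), (0, 2), (1, 2)} := by decide
    rw [pairs, Finset.sum_insert (by decide), Finset.sum_pair (by decide), Fintype.sum_bool,
      Fin.prod_univ_three, Fin.prod_univ_three]
    simp only [boolSign, if_true, Bool.false_eq_true, if_false]
    ring

lemma agreeProb_eq_sum_noisyCorrelation (hk : k = 2 ∨ k = 3) (ε : ℝ)
    (fs : Fin k → (Fin n → Bool) → Bool) :
    agreeProb ε n k fs =
      (1 + ∑ p : Fin k × Fin k with p.1 < p.2, noisyCorrelation ε (fs p.1) (fs p.2)) /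
        2 ^ (k - 1) := by
  have : NeZero k := ⟨by omega⟩
  simp only [agreeProb_eq_expect, sum_prod_one_add_boolSign_mul hk, ← Finset.expect_div,
    Finset.expect_add_distrib, Fintype.expect_one, Finset.expect_sum_comm, noisyCorrelation]

/-- The agreement probability of `k` parties (for `k = 2` or `k = 3`) all using the same
dictator. -/
noncomputable def dictatorAgreeProb (ε : ℝ) (k : ℕ) : ℝ :=
  (1 + ∑ p : Fin k × Fin k with p.1 < p.2, (1 - 2 * ε) ^ 2) / 2 ^ (k - 1)

lemma agreeProb_le_dictatorAgreeProb (hk : k = 2 ∨ k = 3) (hε₀ : 0 ≤ ε) (hε₁ : ε ≤ 1)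
    (hfs : ∀ i, BalancedFn (fs i)) : agreeProb ε n k fs ≤ dictatorAgreeProb ε k := by
  rw [agreeProb_eq_sum_noisyCorrelation hk, dictatorAgreeProb]
  gcongr with p
  exact noisyCorrelation_le hε₀ hε₁ (hfs p.1) (hfs p.2)

lemma IsDictator.agreeProb_const (hk : k = 2 ∨ k = 3) (ε : ℝ) {f : (Fin n → Bool) → Bool}
    (hf : IsDictator f) : agreeProb ε n k (fun _ => f) = dictatorAgreeProb ε k := by
  simp only [agreeProb_eq_sum_noisyCorrelation hk, hf.noisyCorrelation_self, dictatorAgreeProb]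

lemma exists_isDictator_of_agreeProb_eq (hk : k = 2 ∨ k = 3) (hε₀ : 0 < ε) (hε₁ : ε < 1)
    (hε : ε ≠ 1 / 2) (hfs : ∀ i, BalancedFn (fs i))
    (heq : agreeProb ε n k fs = dictatorAgreeProb ε k) :
    ∃ f, IsDictator f ∧ fs = fun _ => f := by
  have sum_eq : ∑ p : Fin k × Fin k with p.1 < p.2, noisyCorrelation ε (fs p.1) (fs p.2) =
      ∑ p : Fin k × Fin k with p.1 < p.2, (1 - 2 * ε) ^ 2 := by
    rw [agreeProb_eq_sum_noisyCorrelation hk, dictatorAgreeProb] at heq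
    exact add_left_cancel ((div_left_inj' (by positivity)).mp heq)
  rw [Finset.sum_eq_sum_iff_of_le fun p _ =>
    noisyCorrelation_le hε₀.le hε₁.le (hfs p.1) (hfs p.2)] at sum_eq
  have pair (i j : Fin k) (hij : i < j) : fs i = fs j ∧ IsDictator (fs i) :=
    (noisyCorrelation_eq_iff hε₀ hε₁ hε (hfs i) (hfs j)).mp (sum_eq (i, j) (by simpa using hij))
  let first : Fin k := ⟨0, by omega⟩
  let second : Fin k := ⟨1, by omega⟩
  refine ⟨fs first, (pair first second (by simp [first, second])).2, funext fun i => ?_⟩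
  rcases (Nat.zero_le i.val).eq_or_lt with hi | hi
  · exact congrArg fs (Fin.ext hi.symm)
  · exact (pair first i hi).1.symm

lemma isDictator_iff_exists_piS (i : Fin n) (f : (Fin n → Bool) → Bool) :
    IsDictator f ↔ ∃ (π : Equiv.Perm (Fin n)) (S : Finset (Fin n)), f = fun x => piS π S x i := by
  constructor
  · rintro ⟨j, b, hf⟩
    refine ⟨Equiv.swap i j, if b then ∅ else Finset.univ, funext fun x => ?_⟩
    cases b <;> simp [piS, hf]
  · rintro ⟨π, S, rfl⟩
    refine ⟨π i, decide (i ∉ S), fun x => ?_⟩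
    by_cases hi : i ∈ S <;> simp [piS, hi]

end Agreement

theorem statement1_general (k n : ℕ) (hk : k = 2 ∨ k = 3) (hn : 0 < n) (ε : ℝ) (hε₀ : 0 < ε)
    (hε₁ : ε < 1) (hε : ε ≠ 1 / 2) :
    {fs : Fin k → (Fin n → Bool) → Bool |
        (∀ i, BalancedFn (fs i)) ∧
          ∀ gs : Fin k → (Fin n → Bool) → Bool, (∀ i, BalancedFn (gs i)) →
            agreeProb ε n k gs ≤ agreeProb ε n k fs} =
      {fs | ∃ (π : Equiv.Perm (Fin n)) (S : Finset (Fin n)),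
          fs = fun _ => fun x => piS π S x ⟨0, hn⟩} := by
  ext fs
  constructor
  · rintro ⟨hfs, hmax⟩
    have first_bit : IsDictator fun x : Fin n → Bool => x ⟨0, hn⟩ := isDictator_eval _
    have hge := hmax _ fun _ => first_bit.balancedFn
    rw [first_bit.agreeProb_const hk] at hge
    have hle := agreeProb_le_dictatorAgreeProb hk hε₀.le hε₁.le hfs
    obtain ⟨f, hf, rfl⟩ := exists_isDictator_of_agreeProb_eq hk hε₀ hε₁ hε hfs (hle.antisymm hge)
    obtain ⟨π, S, rfl⟩ := (isDictator_iff_exists_piS ⟨0, hn⟩ f).mp hf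
    exact ⟨π, S, rfl⟩
  · rintro ⟨π, S, rfl⟩
    have hdict := (isDictator_iff_exists_piS ⟨0, hn⟩ _).mpr ⟨π, S, rfl⟩
    refine ⟨fun _ => hdict.balancedFn, fun gs hgs => ?_⟩
    rw [hdict.agreeProb_const hk]
    exact agreeProb_le_dictatorAgreeProb hk hε₀.le hε₁.le hgs

/-- For `k = 2` or `k = 3`, the unique best protocol of balanced functions, up to `π_S`,
for maximizing the agreement probability is all parties using the first-bit dictator. -/
theorem statement1 (k n : ℕ) (hk : k = 2 ∨ k = 3) (hn : 0 < n) (ε : ℝ) (hε₀ : 0 < ε)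
    (hε₁ : ε < 1 / 2) :
    {fs : Fin k → (Fin n → Bool) → Bool |
        (∀ i, BalancedFn (fs i)) ∧
          ∀ gs : Fin k → (Fin n → Bool) → Bool, (∀ i, BalancedFn (gs i)) →
            agreeProb ε n k gs ≤ agreeProb ε n k fs} =
      {fs | ∃ (π : Equiv.Perm (Fin n)) (S : Finset (Fin n)),
          fs = fun _ => fun x => piS π S x ⟨0, hn⟩} :=
  statement1_general k n hk hn ε hε₀ (by linarith) hε₁.ne
end

section
/- Fix k ≥ 2, n ≥ 1, and 0 < ε < 1/2, and let 𝒞 be any nonempty class of functions from {0,1}^n to {0,1}. Then every k-tuple (f_1,…,f_k) with each f_i ∈ 𝒞 that maximizes 𝒫(f_1,…,f_k;ε) over all such k-tuples satisfies f_1 = f_2 = ⋯ = f_k. -/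
open Finset

/-!
Let `pᵢ(x, b)` be the probability that party `i` outputs `b` when the source is `x`. Given `x` the
parties are independent, so the agreement probability is the average over `x` of
`∑ b, ∏ i, pᵢ(x, b)`. By AM-GM, `∏ i, pᵢ ≤ (1/k) ∑ i, pᵢ ^ k`, and summing this over `(x, b)` bounds
the agreement probability of a tuple by the mean of those of the `k` constant tuples formed from
its entries. A tuple doing at least as well as each of these has equality in AM-GM at every
`(x, b)`, so `pᵢ = pⱼ`. Finally `fᵢ` is recovered from `pᵢ` by inverting the noise: composing the
channels with parameters `δ` and `ε` gives the one with parameter `δ + ε - 2 * δ * ε`, an identity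
valid for all reals, and for `ε ≠ 1/2` the choice `δ = -ε / (1 - 2 * ε)` makes this parameter `0`.
-/

open Fintype (card)
open scoped Matrix

section PowerMeans

variable {ι α : Type*} [Fintype ι] [Fintype α]

lemma card_mul_prod_le_sum_pow_card {a : ι → ℝ} (ha : ∀ i, 0 ≤ a i) :
    card ι * ∏ i, a i ≤ ∑ i, a i ^ card ι := by
  cases isEmpty_or_nonempty ι
  · simp
  have amgm := Real.geom_mean_le_arith_mean_weighted univ (fun _ : ι => (card ι : ℝ)⁻¹)
    (fun i => a i ^ card ι) (fun _ _ => by positivity) (by simp) (fun i _ => pow_nonneg (ha i) _)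
  simp only [Real.pow_rpow_inv_natCast (ha _) Fintype.card_ne_zero, ← mul_sum] at amgm
  rwa [le_inv_mul_iff₀ (by positivity)] at amgm

lemma card_mul_prod_eq_sum_pow_card_iff {a : ι → ℝ} (ha : ∀ i, 0 ≤ a i) :
    card ι * ∏ i, a i = ∑ i, a i ^ card ι ↔ ∀ i j, a i = a j := by
  cases isEmpty_or_nonempty ι
  · simp
  have amgm := Real.geom_mean_eq_arith_mean_weighted_iff_of_pos univ
    (fun _ : ι => (card ι : ℝ)⁻¹) (fun i => a i ^ card ι) (fun _ _ => by positivity) (by simp)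
    (fun i _ => pow_nonneg (ha i) _)
  simp only [Real.pow_rpow_inv_natCast (ha _) Fintype.card_ne_zero, ← mul_sum, mem_univ,
    forall_const, pow_left_inj₀ (ha _) (ha _) Fintype.card_ne_zero] at amgm
  rwa [eq_inv_mul_iff_mul_eq₀ (by positivity)] at amgm

lemma eq_of_sum_pow_card_le_sum_prod {a : ι → α → ℝ} (ha : ∀ i p, 0 ≤ a i p)
    (hle : ∀ i, ∑ p, a i p ^ card ι ≤ ∑ p, ∏ j, a j p) (i j : ι) : a i = a j := by
  have pointwise : ∀ p ∈ univ, card ι * ∏ i, a i p ≤ ∑ i, a i p ^ card ι :=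
    fun p _ => card_mul_prod_le_sum_pow_card fun i => ha i p
  have reverse : ∑ p, ∑ i, a i p ^ card ι ≤ ∑ p, card ι * ∏ i, a i p :=
    calc ∑ p, ∑ i, a i p ^ card ι
        = ∑ i, ∑ p, a i p ^ card ι := sum_comm
      _ ≤ ∑ _i : ι, ∑ p, ∏ j, a j p := sum_le_sum fun i _ => hle i
      _ = ∑ p, card ι * ∏ i, a i p := by
        rw [sum_const, card_univ, nsmul_eq_mul, mul_sum]
  have equality := (sum_eq_sum_iff_of_le pointwise).1 (le_antisymm (sum_le_sum pointwise) reverse)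
  funext p
  exact (card_mul_prod_eq_sum_pow_card_iff fun i => ha i p).1 (equality p (mem_univ p)) i j

end PowerMeans

lemma ite_forall_eq_eq_sum_prod_ite {ι β R : Type*} [Fintype ι] [Nonempty ι] [Fintype β]
    [DecidableEq β] [CommSemiring R] (u : ι → β) [Decidable (∀ i j, u i = u j)] :
    (if ∀ i j, u i = u j then (1 : R) else 0) = ∑ b, ∏ i, if u i = b then 1 else 0 := by
  obtain ⟨i₀⟩ := ‹Nonempty ι›
  simp only [Fintype.prod_boole]
  rw [Fintype.sum_eq_single (u i₀) fun b hb => if_neg fun h => hb (h i₀).symm]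
  exact if_congr ⟨fun h i => h i i₀, fun h i j => (h i).trans (h j).symm⟩ rfl rfl

section Noise

variable {n : ℕ} {ε : ℝ}

lemma noiseWt_nonneg (hε : ε ∈ Set.Icc 0 1) (x y : Fin n → Bool) : 0 ≤ noiseWt ε x y :=
  prod_nonneg fun j _ => by split_ifs <;> linarith [hε.1, hε.2]

/-- The transition matrix of the binary symmetric channel on `{0,1}ⁿ`, defined for every real `ε` so
that the channel has an inverse of the same form. -/
noncomputable def noiseMatrix (n : ℕ) (ε : ℝ) : Matrix (Fin n → Bool) (Fin n → Bool) ℝ :=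
  Matrix.of (noiseWt ε)

lemma noiseMatrix_mul_noiseMatrix (n : ℕ) (δ ε : ℝ) :
    noiseMatrix n δ * noiseMatrix n ε = noiseMatrix n (δ + ε - 2 * δ * ε) := by
  ext x y
  simp only [Matrix.mul_apply, noiseMatrix, Matrix.of_apply, noiseWt, ← prod_mul_distrib]
  rw [← Fintype.prod_sum fun j b =>
    (if b = x j then 1 - δ else δ) * if y j = b then 1 - ε else ε]
  refine prod_congr rfl fun j _ => ?_
  cases x j <;> cases y j <;> simp <;> ring

lemma noiseMatrix_zero (n : ℕ) : noiseMatrix n 0 = 1 := by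
  ext x y
  simp only [noiseMatrix, Matrix.of_apply, noiseWt, sub_zero, Fintype.prod_boole, Matrix.one_apply,
    ← funext_iff, eq_comm]

lemma isUnit_noiseMatrix (n : ℕ) (hε : ε ≠ 1 / 2) : IsUnit (noiseMatrix n ε) := by
  have hne : 1 - 2 * ε ≠ 0 := fun h => hε (by linarith)
  refine IsUnit.of_mul_eq_one_right (noiseMatrix n (-ε / (1 - 2 * ε))) ?_
  have cancel : -ε / (1 - 2 * ε) + ε - 2 * (-ε / (1 - 2 * ε)) * ε = 0 := by
    linear_combination div_mul_cancel₀ (-ε) hne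
  rw [noiseMatrix_mul_noiseMatrix, cancel, noiseMatrix_zero]

end Noise

section OutputProb

variable {n : ℕ} {ε : ℝ} {β : Type*} [DecidableEq β]

/-- The probability, as a function of the source `x`, that a party applying `f` to an
`ε`-corruption of `x` outputs `b`. -/
noncomputable def outputProb (ε : ℝ) (f : (Fin n → Bool) → β) (b : β) : (Fin n → Bool) → ℝ :=
  noiseMatrix n ε *ᵥ fun y => if f y = b then 1 else 0

lemma outputProb_apply (ε : ℝ) (f : (Fin n → Bool) → β) (b : β) (x : Fin n → Bool) :
    outputProb ε f b x = ∑ y, noiseWt ε x y * if f y = b then 1 else 0 :=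
  rfl

lemma outputProb_nonneg (hε : ε ∈ Set.Icc 0 1) (f : (Fin n → Bool) → β) (b : β)
    (x : Fin n → Bool) : 0 ≤ outputProb ε f b x :=
  sum_nonneg fun y _ => mul_nonneg (noiseWt_nonneg hε x y) (by positivity)

lemma outputProb_injective (hε : ε ≠ 1 / 2) :
    Function.Injective (outputProb ε : ((Fin n → Bool) → β) → β → (Fin n → Bool) → ℝ) := by
  intro f g hfg
  funext y
  have indicator_eq := Matrix.mulVec_injective_of_isUnit (isUnit_noiseMatrix n hε)
    (congrFun hfg (g y))
  simpa using congrFun indicator_eq y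

lemma agreeProb_eq_sum_prod_outputProb (ε : ℝ) {k : ℕ} [NeZero k]
    (fs : Fin k → (Fin n → Bool) → Bool) :
    agreeProb ε n k fs =
      ((2 : ℝ) ^ n)⁻¹ * ∑ p : (Fin n → Bool) × Bool, ∏ i, outputProb ε (fs i) p.2 p.1 := by
  simp only [agreeProb, Fintype.sum_prod_type, outputProb_apply, Fintype.prod_sum]
  congr 1
  refine sum_congr rfl fun x _ => ?_
  simp only [ite_forall_eq_eq_sum_prod_ite, mul_sum, prod_mul_distrib]
  exact sum_comm

end OutputProb

theorem statement5_general {k n : ℕ} {ε : ℝ} (hε : ε ∈ Set.Icc 0 1) (hε_ne : ε ≠ 1 / 2)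
    (fs : Fin k → (Fin n → Bool) → Bool)
    (hmax : ∀ i, agreeProb ε n k (fun _ => fs i) ≤ agreeProb ε n k fs) (i j : Fin k) :
    fs i = fs j := by
  have : NeZero k := ⟨i.pos.ne'⟩
  have sum_pow_le (l : Fin k) : ∑ p : (Fin n → Bool) × Bool, outputProb ε (fs l) p.2 p.1 ^ k ≤
      ∑ p : (Fin n → Bool) × Bool, ∏ i, outputProb ε (fs i) p.2 p.1 := by
    simpa [agreeProb_eq_sum_prod_outputProb] using hmax l
  have outputProb_eq := eq_of_sum_pow_card_le_sum_prod
    (a := fun l (p : (Fin n → Bool) × Bool) => outputProb ε (fs l) p.2 p.1)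
    (fun l p => outputProb_nonneg hε (fs l) p.2 p.1) (by simpa using sum_pow_le) i j
  exact outputProb_injective hε_ne (funext₂ fun b x => congrFun outputProb_eq (x, b))

/-- Every maximizer of the agreement probability over tuples from any class `𝒞`
has all parties using the same function. -/
theorem statement5 (k n : ℕ) (hk : 2 ≤ k) (hn : 1 ≤ n) (ε : ℝ) (hε₀ : 0 < ε)
    (hε₁ : ε < 1 / 2) (𝒞 : Set ((Fin n → Bool) → Bool)) (h𝒞 : 𝒞.Nonempty)
    (fs : Fin k → (Fin n → Bool) → Bool) (hfs : ∀ i, fs i ∈ 𝒞)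
    (hmax : ∀ gs : Fin k → (Fin n → Bool) → Bool, (∀ i, gs i ∈ 𝒞) →
      agreeProb ε n k gs ≤ agreeProb ε n k fs) :
    ∀ i j : Fin k, fs i = fs j := by
  exact statement5_general ⟨hε₀.le, by linarith⟩ hε₁.ne fs fun i => hmax _ fun _ => hfs i
end
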